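/- A connected signed graph Σ is balanced if and only if det L^max(Σ) = 0, where L^max(Σ) = Tr(G) − D^max(Σ) is the max-signed distance Laplacian matrix. -/

import Mathlib

/-!
Write `L` for the max-signed distance Laplacian and `s` for `σ_max`. For a real vector `x`,
`(L x)_u = ∑_v d(u,v) (x_u - s(u,v) x_v)`, and `det L = 0` means that `L` has a nonzero kernel
vector.

If the graph is balanced, then every closed walk is positive (`walkSign_closed`: shortcutting a
walk to a path only deletes cycles and back-and-forth edges). Signs of walks from a fixed root
thus give a labelling `x : V → {±1}` with `sign(p) = x_u x_v` for every `uv`-walk `p`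
(`exists_switching`), hence `s(u,v) = x_u x_v` and `L x = 0`.

Conversely, let `L x = 0` with `x ≠ 0`. At a vertex `u` where `|x|` is maximal, the terms of
`x_u (L x)_u` are nonnegative, so `x_u = s(u,v) x_v` for all `v ≠ u` (`eq_sigmaMax_mul_of_max`).
Therefore `|x|` is constant and nonzero, and these equations hold at every `u`. For an edge they
read `x_u = σ(uv) x_v`; multiplied along a closed walk they show that its sign is `1`.
-/


open Classical

noncomputable section

/-- `σ_max(u,v)`: the maximum of `σ(P)` over all shortest `uv`-paths `P`; it is `-1`
exactly when all shortest `uv`-paths are negative. -/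
def sigmaMax {V : Type*} (G : SimpleGraph V) (σ : Sym2 V → ℝ) (u v : V) : ℝ :=
  if ∃ p : G.Walk u v, p.IsPath ∧ p.length = G.dist u v ∧ (p.edges.map σ).prod = 1
  then 1 else -1

/-- `σ_min(u,v)`: the minimum of `σ(P)` over all shortest `uv`-paths `P`; it is `+1`
exactly when all shortest `uv`-paths are positive. -/
def sigmaMin {V : Type*} (G : SimpleGraph V) (σ : Sym2 V → ℝ) (u v : V) : ℝ :=
  if ∃ p : G.Walk u v, p.IsPath ∧ p.length = G.dist u v ∧ (p.edges.map σ).prod = -1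
  then -1 else 1

/-- The max-signed distance matrix `D^max(Σ) = (σ_max(u,v) d(u,v))`. -/
def distMax {V : Type*} [Fintype V] (G : SimpleGraph V) (σ : Sym2 V → ℝ) :
    Matrix V V ℝ :=
  Matrix.of fun u v => sigmaMax G σ u v * (G.dist u v : ℝ)

/-- The min-signed distance matrix `D^min(Σ) = (σ_min(u,v) d(u,v))`. -/
def distMin {V : Type*} [Fintype V] (G : SimpleGraph V) (σ : Sym2 V → ℝ) :
    Matrix V V ℝ :=
  Matrix.of fun u v => sigmaMin G σ u v * (G.dist u v : ℝ)

/-- The diagonal matrix `Tr(G)` of transmissions `Tr(v) = ∑_u d(v,u)`. -/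
def transMat {V : Type*} [Fintype V] [DecidableEq V] (G : SimpleGraph V) :
    Matrix V V ℝ :=
  Matrix.diagonal fun v => ((∑ u, G.dist v u : ℕ) : ℝ)

/-- The max-signed distance Laplacian `L^max(Σ) = Tr(G) - D^max(Σ)`. -/
def lapMax {V : Type*} [Fintype V] [DecidableEq V] (G : SimpleGraph V)
    (σ : Sym2 V → ℝ) : Matrix V V ℝ :=
  transMat G - distMax G σ

/-- The min-signed distance Laplacian `L^min(Σ) = Tr(G) - D^min(Σ)`. -/
def lapMin {V : Type*} [Fintype V] [DecidableEq V] (G : SimpleGraph V)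
    (σ : Sym2 V → ℝ) : Matrix V V ℝ :=
  transMat G - distMin G σ

/-- The sign of a walk: the product of the signs of its edges. -/
def walkSign {V : Type*} {G : SimpleGraph V} (σ : Sym2 V → ℝ) {u v : V} (p : G.Walk u v) : ℝ :=
  (p.edges.map σ).prod

section
variable {V : Type*} {G : SimpleGraph V} {σ : Sym2 V → ℝ}

theorem walkSign_nil (u : V) : walkSign σ (SimpleGraph.Walk.nil : G.Walk u u) = 1 := by
  simp [walkSign]

theorem walkSign_cons {u v w : V} (h : G.Adj u v) (p : G.Walk v w) :
    walkSign σ (SimpleGraph.Walk.cons h p) = σ s(u, v) * walkSign σ p := by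
  simp [walkSign]

theorem walkSign_append {u v w : V} (p : G.Walk u v) (q : G.Walk v w) :
    walkSign σ (p.append q) = walkSign σ p * walkSign σ q := by
  simp [walkSign]

theorem walkSign_reverse {u v : V} (p : G.Walk u v) :
    walkSign σ p.reverse = walkSign σ p := by
  simp [walkSign, List.prod_reverse]

theorem walkSign_eq_or (hσ : ∀ e ∈ G.edgeSet, σ e = 1 ∨ σ e = -1) {u v : V} (p : G.Walk u v) :
    walkSign σ p = 1 ∨ walkSign σ p = -1 := by
  induction p with
  | nil => exact Or.inl (walkSign_nil _)
  | cons h p ih =>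
    rw [walkSign_cons]
    rcases hσ _ (G.mem_edgeSet.2 h) with h1 | h1 <;> rcases ih with h2 | h2 <;> simp [h1, h2]

/-- A path joining the ends of an edge either closes up with that edge to a cycle, or is that
edge itself; in both cases the resulting closed walk is positive in a balanced graph. -/
theorem walkSign_cons_path (hσ : ∀ e ∈ G.edgeSet, σ e = 1 ∨ σ e = -1)
    (hb : ∀ (u : V) (c : G.Walk u u), c.IsCycle → walkSign σ c = 1)
    {u v : V} (h : G.Adj u v) (p : G.Walk v u) (hp : p.IsPath) :
    σ s(u, v) * walkSign σ p = 1 := by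
  by_cases he : s(u, v) ∈ p.edges
  · cases p with
    | nil => exact absurd h (G.irrefl)
    | @cons _ w _ h' q =>
      rw [SimpleGraph.Walk.cons_isPath_iff] at hp
      have hw : w = u := by
        rw [SimpleGraph.Walk.edges_cons, List.mem_cons] at he
        rcases he with he | he
        · rcases Sym2.eq_iff.1 he with ⟨h1, _⟩ | ⟨h1, _⟩
          · exact absurd h1 h.ne
          · exact h1.symm
        · exact absurd (q.snd_mem_support_of_mem_edges he) hp.2
      subst hw
      rw [SimpleGraph.Walk.isPath_iff_nil, ← SimpleGraph.Walk.eq_nil_iff_nil] at hp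
      rw [hp.1, walkSign_cons, walkSign_nil, Sym2.eq_swap]
      rcases hσ _ (G.mem_edgeSet.2 h') with h1 | h1 <;> simp [h1]
  · rw [← walkSign_cons h p]
    exact hb _ _ ((SimpleGraph.Walk.cons_isCycle_iff p h).2 ⟨hp, he⟩)

/-- In a balanced graph, shortcutting a walk to a path only removes positive closed walks. -/
theorem walkSign_bypass [DecidableEq V] (hσ : ∀ e ∈ G.edgeSet, σ e = 1 ∨ σ e = -1)
    (hb : ∀ (u : V) (c : G.Walk u u), c.IsCycle → walkSign σ c = 1)
    {u v : V} (p : G.Walk u v) : walkSign σ p.bypass = walkSign σ p := by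
  induction p with
  | nil => rfl
  | @cons a b c h p ih =>
    rw [walkSign_cons, ← ih]
    simp only [SimpleGraph.Walk.bypass]
    split_ifs with hs
    · have h1 := walkSign_cons_path hσ hb h (p.bypass.takeUntil a hs)
        (p.bypass_isPath.takeUntil hs)
      have h2 := walkSign_append (σ := σ) (p.bypass.takeUntil a hs) (p.bypass.dropUntil a hs)
      rw [SimpleGraph.Walk.take_spec] at h2
      rw [h2, ← mul_assoc, h1, one_mul]
    · rw [walkSign_cons]

theorem walkSign_closed [DecidableEq V] (hσ : ∀ e ∈ G.edgeSet, σ e = 1 ∨ σ e = -1)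
    (hb : ∀ (u : V) (c : G.Walk u u), c.IsCycle → walkSign σ c = 1)
    {u : V} (p : G.Walk u u) : walkSign σ p = 1 := by
  rw [← walkSign_bypass hσ hb, SimpleGraph.Walk.eq_nil_iff_nil.2 (SimpleGraph.Walk.isPath_iff_nil.1 p.bypass_isPath),
    walkSign_nil]

/-- Balanced graphs are switching equivalent to all-positive ones: a `±1` vertex labelling `x`
turns every walk sign into the product of the labels at its ends. -/
theorem exists_switching [DecidableEq V] (hσ : ∀ e ∈ G.edgeSet, σ e = 1 ∨ σ e = -1) (hconn : G.Connected)
    (hb : ∀ (u : V) (c : G.Walk u u), c.IsCycle → walkSign σ c = 1) :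
    ∃ x : V → ℝ, (∀ v, x v * x v = 1) ∧
      ∀ (u v : V) (p : G.Walk u v), walkSign σ p = x u * x v := by
  obtain ⟨r⟩ := hconn.nonempty
  have hw : ∀ v, Nonempty (G.Walk r v) := fun v => hconn.preconnected r v
  have hx : ∀ v, walkSign σ (hw v).some * walkSign σ (hw v).some = 1 := fun v => by
    rcases walkSign_eq_or hσ (hw v).some with h | h <;> simp [h]
  refine ⟨fun v => walkSign σ (hw v).some, hx, fun u v p => ?_⟩
  have h := walkSign_closed hσ hb (((hw u).some.append p).append (hw v).some.reverse)
  rw [walkSign_append, walkSign_append, walkSign_reverse] at h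
  have hu := hx u
  have hv := hx v
  linear_combination
    (walkSign σ (hw u).some * walkSign σ (hw v).some) * h - walkSign σ p * hu
      - walkSign σ p * (walkSign σ (hw u).some) ^ 2 * hv

theorem sigmaMax_eq_or (u v : V) : sigmaMax G σ u v = 1 ∨ sigmaMax G σ u v = -1 := by
  unfold sigmaMax
  split_ifs <;> simp

/-- The only shortest path between adjacent vertices is the edge joining them. -/
theorem sigmaMax_of_adj (hσ : ∀ e ∈ G.edgeSet, σ e = 1 ∨ σ e = -1) {u v : V} (h : G.Adj u v) :
    sigmaMax G σ u v = σ s(u, v) := by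
  have hd : G.dist u v = 1 := SimpleGraph.dist_eq_one_iff_adj.2 h
  have key : (∃ p : G.Walk u v, p.IsPath ∧ p.length = G.dist u v ∧ (p.edges.map σ).prod = 1) ↔
      σ s(u, v) = 1 := by
    constructor
    · rintro ⟨p, -, hl, hp⟩
      rw [hd] at hl
      cases p with
      | nil => simp at hl
      | cons h' q =>
        cases q with
        | nil => simpa using hp
        | cons h'' q => simp at hl
    · intro h1
      exact ⟨h.toWalk, by simp [h.ne], by simp [hd], by simpa using h1⟩
  unfold sigmaMax
  rcases hσ _ (G.mem_edgeSet.2 h) with h1 | h1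
  · rw [if_pos (key.2 h1), h1]
  · rw [if_neg (fun hh => by have := key.1 hh; norm_num [h1] at this), h1]

theorem sigmaMax_of_switching (hσ : ∀ e ∈ G.edgeSet, σ e = 1 ∨ σ e = -1) (hconn : G.Connected)
    {x : V → ℝ} (hx : ∀ (u v : V) (p : G.Walk u v), walkSign σ p = x u * x v) (u v : V) :
    sigmaMax G σ u v = x u * x v := by
  unfold sigmaMax
  split_ifs with h
  · obtain ⟨p, -, -, hp⟩ := h
    rw [← hx u v p]
    exact hp.symm
  · obtain ⟨p, hp, hl⟩ := hconn.exists_path_of_dist u v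
    rw [← hx u v p]
    rcases walkSign_eq_or hσ p with h1 | h1
    · exact absurd ⟨p, hp, hl, h1⟩ h
    · exact h1.symm

theorem lapMax_mulVec [Fintype V] [DecidableEq V] (x : V → ℝ) (u : V) :
    (lapMax G σ).mulVec x u = ∑ v, (G.dist u v : ℝ) * (x u - sigmaMax G σ u v * x v) := by
  rw [lapMax, Matrix.sub_mulVec, Pi.sub_apply, transMat, Matrix.mulVec_diagonal]
  simp only [Matrix.mulVec, dotProduct, distMax, Matrix.of_apply]
  push_cast
  rw [Finset.sum_mul, ← Finset.sum_sub_distrib]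
  exact Finset.sum_congr rfl fun v _ => by ring

/-- At a vertex `u` where `|x|` is maximal, the `u`-th coordinate of `L^max x = 0` times `x u` is
a sum of nonnegative terms, so each term vanishes. -/
theorem eq_sigmaMax_mul_of_max [Fintype V] [DecidableEq V] (hconn : G.Connected) {x : V → ℝ}
    (hL : (lapMax G σ).mulVec x = 0) {u : V} (hu : x u ≠ 0) (hmax : ∀ v, |x v| ≤ |x u|)
    {v : V} (huv : u ≠ v) : x u = sigmaMax G σ u v * x v := by
  have h0 : ∑ w, (G.dist u w : ℝ) * (x u - sigmaMax G σ u w * x w) * x u = 0 := by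
    rw [← Finset.sum_mul, ← lapMax_mulVec, hL]
    simp
  have hnn : ∀ w ∈ Finset.univ, 0 ≤ (G.dist u w : ℝ) * (x u - sigmaMax G σ u w * x w) * x u := by
    intro w _
    rw [mul_assoc]
    refine mul_nonneg (Nat.cast_nonneg _) ?_
    have hs : |sigmaMax G σ u w| = 1 := by
      rcases sigmaMax_eq_or (G := G) (σ := σ) u w with h | h <;> simp [h]
    have h1 : sigmaMax G σ u w * x w * x u ≤ |x u| * |x u| := by
      refine (le_abs_self _).trans ?_
      rw [abs_mul, abs_mul, hs, one_mul]
      exact mul_le_mul_of_nonneg_right (hmax w) (abs_nonneg _)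
    rw [abs_mul_abs_self] at h1
    linarith
  have h1 := (Finset.sum_eq_zero_iff_of_nonneg hnn).1 h0 v (Finset.mem_univ v)
  have hd : (G.dist u v : ℝ) ≠ 0 := Nat.cast_ne_zero.2 (hconn.pos_dist_of_ne huv).ne'
  have h2 := (mul_eq_zero.1 ((mul_eq_zero.1 h1).resolve_right hu)).resolve_left hd
  linarith

end

/-- A connected signed graph `Σ` is balanced (every cycle has positive
sign) if and only if `det L^max(Σ) = 0`. -/
theorem balanced_iff_det_lapMax_eq_zero
    {V : Type*} [Fintype V] [DecidableEq V] (G : SimpleGraph V)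
    (σ : Sym2 V → ℝ)
    (hσ : ∀ e ∈ G.edgeSet, σ e = 1 ∨ σ e = -1)
    (hconn : G.Connected) :
    (∀ (u : V) (c : G.Walk u u), c.IsCycle → (c.edges.map σ).prod = 1) ↔
      (lapMax G σ).det = 0 := by
  change (∀ (u : V) (c : G.Walk u u), c.IsCycle → walkSign σ c = 1) ↔ _
  rw [← Matrix.exists_mulVec_eq_zero_iff]
  constructor
  · intro hb
    obtain ⟨x, hx1, hx⟩ := exists_switching hσ hconn hb
    refine ⟨x, ?_, ?_⟩
    · rintro rfl
      obtain ⟨r⟩ := hconn.nonempty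
      simpa using hx1 r
    · ext u
      rw [lapMax_mulVec]
      refine Finset.sum_eq_zero fun v _ => ?_
      rw [sigmaMax_of_switching hσ hconn hx, mul_assoc, hx1]
      ring
  · rintro ⟨x, hx0, hL⟩
    have hne : Nonempty V := hconn.nonempty
    obtain ⟨u, hmax⟩ := Finite.exists_max fun v => |x v|
    have hu : x u ≠ 0 := by
      intro hu
      refine hx0 (funext fun v => ?_)
      have := hmax v
      rw [hu, abs_zero] at this
      exact abs_nonpos_iff.1 this
    -- `|x|` is constant, so every vertex is a maximum of `|x|`.
    have habs : ∀ v, |x u| = |x v| := by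
      intro v
      by_cases huv : u = v
      · rw [huv]
      · rw [eq_sigmaMax_mul_of_max hconn hL hu hmax huv, abs_mul]
        rcases sigmaMax_eq_or (G := G) (σ := σ) u v with h | h <;> simp [h]
    have hnz : ∀ v, x v ≠ 0 := fun v => by
      rw [← abs_pos, ← habs v]
      exact abs_pos.2 hu
    have hedge : ∀ a b, G.Adj a b → x a = σ s(a, b) * x b := by
      intro a b hab
      rw [← sigmaMax_of_adj hσ hab]
      exact eq_sigmaMax_mul_of_max hconn hL (hnz a) (fun v => by rw [← habs v, ← habs a]) hab.ne
    have hwalk : ∀ (a b : V) (p : G.Walk a b), x a = walkSign σ p * x b := by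
      intro a b p
      induction p with
      | nil => rw [walkSign_nil, one_mul]
      | cons h p ih => rw [walkSign_cons, mul_assoc, ← ih, ← hedge _ _ h]
    intro a c _
    exact mul_right_cancel₀ (hnz a) (by rw [← hwalk a a c, one_mul])
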